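/- Lemma 3, part (i): Let N, K, F be positive integers, M ≥ 0 a real, W_1,…,W_N i.i.d. uniform on {1,…,2^F}, and V_k = g_k(W_1,…,W_N) for k ∈ {1,…,K} where each g_k maps into a set of size at most ⌊2^{F·M}⌋. Fix ℓ ∈ {1,…,min(K,N)} and for k ∈ {1,…,ℓ} define α_k := (1/(F·binom(N,ℓ)·ℓ!))·∑_{d ∈ Q_ℓ^dist} I(W_{d_k}; V_1,…,V_k | W_{d_1},…,W_{d_{k−1}}), where Q_ℓ^dist is the set of ordered ℓ-tuples (d_1,…,d_ℓ) of pairwise distinct elements of {1,…,N} (so |Q_ℓ^dist| = binom(N,ℓ)·ℓ!). Then for every k ∈ {1,…,ℓ}: α_k ≤ k·M/(N−k+1). -/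

import Mathlib

/-- Probability that the discrete random variable `X` (on finite space `Ω` with
probability mass function `p`) takes the value `x`. -/
noncomputable def pr {Ω : Type*} [Fintype Ω] {α : Type*} [DecidableEq α]
    (p : Ω → ℝ) (X : Ω → α) (x : α) : ℝ :=
  ∑ ω ∈ Finset.univ.filter (fun ω => X ω = x), p ω

/-- Shannon entropy (base 2) of the discrete random variable `X`. -/
noncomputable def ent {Ω : Type*} [Fintype Ω] {α : Type*} [DecidableEq α]
    (p : Ω → ℝ) (X : Ω → α) : ℝ :=
  -∑ x ∈ Finset.univ.image X, pr p X x * Real.logb 2 (pr p X x)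

/-- Conditional mutual information `I(X;Y|Z) = H(X,Z) + H(Y,Z) − H(X,Y,Z) − H(Z)`
(base 2). -/
noncomputable def cmi {Ω : Type*} [Fintype Ω] {α β γ : Type*}
    [DecidableEq α] [DecidableEq β] [DecidableEq γ]
    (p : Ω → ℝ) (X : Ω → α) (Y : Ω → β) (Z : Ω → γ) : ℝ :=
  ent p (fun ω => (X ω, Z ω)) + ent p (fun ω => (Y ω, Z ω))
    - ent p (fun ω => (X ω, Y ω, Z ω)) - ent p Z


section Helpers
variable {Ω : Type*} [Fintype Ω]

theorem ent_eq_sum {α : Type*} [DecidableEq α] (p : Ω → ℝ) (X : Ω → α) :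
    ent p X = -∑ ω, p ω * Real.logb 2 (pr p X (X ω)) := by
  unfold ent
  congr 1
  rw [← Finset.sum_fiberwise_of_maps_to (s := Finset.univ) (t := Finset.univ.image X) (g := X)
    (fun ω _ => Finset.mem_image_of_mem X (Finset.mem_univ ω))]
  refine Finset.sum_congr rfl fun x _ => ?_
  conv_lhs => rw [pr, Finset.sum_mul]
  refine Finset.sum_congr rfl fun ω hω => ?_
  rw [(Finset.mem_filter.1 hω).2]
  rfl

theorem ent_congr {α β : Type*} [DecidableEq α] [DecidableEq β] (p : Ω → ℝ)
    (X : Ω → α) (Y : Ω → β) (h : ∀ ω ω', X ω = X ω' ↔ Y ω = Y ω') : ent p X = ent p Y := by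
  rw [ent_eq_sum, ent_eq_sum]
  have : ∀ ω, pr p X (X ω) = pr p Y (Y ω) := fun ω => by
    unfold pr
    refine Finset.sum_congr ?_ fun _ _ => rfl
    ext ω'
    simp [h]
  simp [this]

theorem pr_pos {α : Type*} [DecidableEq α] (p : Ω → ℝ) (hp : ∀ ω, 0 < p ω) (X : Ω → α) (ω : Ω) :
    0 < pr p X (X ω) := by
  unfold pr
  exact Finset.sum_pos (fun _ _ => hp _) ⟨ω, by simp⟩

/-- Gibbs-type inequality. -/
theorem gibbs (p q : Ω → ℝ) (hp : ∀ ω, 0 < p ω) (hs : ∑ ω, p ω = 1) (hq : ∀ ω, 0 < q ω)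
    (h : ∑ ω, p ω * q ω ≤ 1) : ∑ ω, p ω * Real.logb 2 (q ω) ≤ 0 := by
  have h2 : 0 < Real.log 2 := Real.log_pos (by norm_num)
  have : ∑ ω, p ω * Real.log (q ω) ≤ 0 := by
    calc ∑ ω, p ω * Real.log (q ω) ≤ ∑ ω, p ω * (q ω - 1) :=
          Finset.sum_le_sum fun ω _ =>
            mul_le_mul_of_nonneg_left (Real.log_le_sub_one_of_pos (hq ω)) (hp ω).le
      _ = ∑ ω, p ω * q ω - ∑ ω, p ω := by rw [← Finset.sum_sub_distrib]; simp [mul_sub]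
      _ ≤ 0 := by linarith
  have e : ∑ ω, p ω * Real.logb 2 (q ω) = (∑ ω, p ω * Real.log (q ω)) / Real.log 2 := by
    rw [Finset.sum_div]
    refine Finset.sum_congr rfl fun ω _ => ?_
    rw [Real.logb, mul_div_assoc]
  rw [e]
  exact div_nonpos_of_nonpos_of_nonneg this h2.le

theorem sum_div_pr {α : Type*} [DecidableEq α] (p : Ω → ℝ) (hp : ∀ ω, 0 < p ω) (X : Ω → α) 
    (ω₀ : Ω) : ∑ ω ∈ Finset.univ.filter (fun ω => X ω = X ω₀), p ω / pr p X (X ω) = 1 := by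
  have : ∑ ω ∈ Finset.univ.filter (fun ω => X ω = X ω₀), p ω / pr p X (X ω)
      = ∑ ω ∈ Finset.univ.filter (fun ω => X ω = X ω₀), p ω / pr p X (X ω₀) :=
    Finset.sum_congr rfl fun ω hω => by rw [(Finset.mem_filter.1 hω).2]
  rw [this, ← Finset.sum_div]
  exact div_self (pr_pos p hp X ω₀).ne'

theorem ent_le_card {α : Type*} [DecidableEq α] [Fintype α] [Nonempty Ω] (p : Ω → ℝ)
    (hp : ∀ ω, 0 < p ω) (hs : ∑ ω, p ω = 1) (X : Ω → α) :
    ent p X ≤ Real.logb 2 (Fintype.card α) := by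
  have hne : Nonempty α := ⟨X (Classical.arbitrary Ω)⟩
  have hc : (0 : ℝ) < Fintype.card α := by exact_mod_cast Fintype.card_pos
  have key := gibbs p (fun ω => (pr p X (X ω))⁻¹ * (Fintype.card α : ℝ)⁻¹) hp hs
    (fun ω => mul_pos (inv_pos.2 (pr_pos p hp X ω)) (inv_pos.2 hc)) (by
      have : ∑ ω, p ω / pr p X (X ω) ≤ Fintype.card α := by
        rw [← Finset.sum_fiberwise_of_maps_to (s := Finset.univ) (t := Finset.univ) (g := X)
          (fun ω _ => Finset.mem_univ _)]
        calc _ ≤ ∑ x : α, (1 : ℝ) := Finset.sum_le_sum fun x _ => by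
              by_cases hx : ∃ ω, X ω = x
              · obtain ⟨ω, rfl⟩ := hx
                exact (sum_div_pr p hp X ω).le
              · rw [Finset.filter_false_of_mem]
                · simp
                · intro ω _ h
                  exact hx ⟨ω, h⟩
          _ = _ := by simp
      calc _ = (∑ ω, p ω / pr p X (X ω)) * (Fintype.card α : ℝ)⁻¹ := by
            rw [Finset.sum_mul]; simp [div_eq_mul_inv, mul_assoc]
        _ ≤ Fintype.card α * (Fintype.card α : ℝ)⁻¹ := by gcongr
        _ = 1 := mul_inv_cancel₀ hc.ne')
  have e : ∀ ω, p ω * Real.logb 2 ((pr p X (X ω))⁻¹ * (Fintype.card α : ℝ)⁻¹)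
      = -(p ω * Real.logb 2 (pr p X (X ω))) - p ω * Real.logb 2 (Fintype.card α) := fun ω => by
    rw [Real.logb_mul (inv_pos.2 (pr_pos p hp X ω)).ne' (inv_pos.2 hc).ne', Real.logb_inv,
      Real.logb_inv]
    ring
  simp only [e] at key
  rw [Finset.sum_sub_distrib, Finset.sum_neg_distrib, ← Finset.sum_mul, hs] at key
  rw [ent_eq_sum]
  linarith

theorem submod {α β γ : Type*} [DecidableEq α] [DecidableEq β] [DecidableEq γ] (p : Ω → ℝ)
    (hp : ∀ ω, 0 < p ω) (hs : ∑ ω, p ω = 1) (X : Ω → α) (Y : Ω → β) (Z : Ω → γ) :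
    ent p (fun ω => (X ω, Y ω, Z ω)) + ent p Z
      ≤ ent p (fun ω => (X ω, Z ω)) + ent p (fun ω => (Y ω, Z ω)) := by
  set A := fun ω => (X ω, Z ω) with hA
  set B := fun ω => (Y ω, Z ω) with hB
  set C := fun ω => (X ω, Y ω, Z ω) with hC
  have pA := pr_pos p hp A
  have pB := pr_pos p hp B
  have pC := pr_pos p hp C
  have pZ := pr_pos p hp Z
  have key := gibbs p (fun ω => pr p A (A ω) * pr p B (B ω) / (pr p C (C ω) * pr p Z (Z ω))) hp hs
    (fun ω => div_pos (mul_pos (pA ω) (pB ω)) (mul_pos (pC ω) (pZ ω))) (by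
      have e1 : ∀ ω, p ω * (pr p A (A ω) * pr p B (B ω) / (pr p C (C ω) * pr p Z (Z ω)))
          = ∑ ω₁, ∑ ω₂, if A ω₁ = A ω ∧ B ω₂ = B ω then
              p ω₁ * (p ω₂ / pr p Z (Z ω₂)) * (p ω / pr p C (C ω)) else 0 := fun ω => by
        have : p ω * (pr p A (A ω) * pr p B (B ω) / (pr p C (C ω) * pr p Z (Z ω)))
          = pr p A (A ω) * pr p B (B ω) * (p ω / pr p C (C ω) / pr p Z (Z ω)) := by
          field_simp
        rw [this]
        conv_lhs => rw [pr, pr, Finset.sum_mul_sum, Finset.sum_mul, Finset.sum_filter]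
        refine Finset.sum_congr rfl fun ω₁ _ => ?_
        by_cases h1 : A ω₁ = A ω
        · simp only [h1, if_true, true_and]
          rw [Finset.sum_mul, Finset.sum_filter]
          refine Finset.sum_congr rfl fun ω₂ _ => ?_
          by_cases h2 : B ω₂ = B ω
          · simp only [h2, if_true]
            have : Z ω₂ = Z ω := (Prod.mk.inj h2).2
            rw [this]
            ring
          · simp [h2]
        · simp [h1]
      simp only [e1]
      rw [Finset.sum_comm]
      have e2 : ∀ ω₁ ω₂, (∑ ω, if A ω₁ = A ω ∧ B ω₂ = B ω then
              p ω₁ * (p ω₂ / pr p Z (Z ω₂)) * (p ω / pr p C (C ω)) else 0)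
            ≤ if Z ω₂ = Z ω₁ then p ω₁ * (p ω₂ / pr p Z (Z ω₂)) else 0 := fun ω₁ ω₂ => by
        have h0 : 0 ≤ p ω₁ * (p ω₂ / pr p Z (Z ω₂)) :=
          (mul_pos (hp _) (div_pos (hp _) (pZ _))).le
        by_cases h : ∃ ω, A ω₁ = A ω ∧ B ω₂ = B ω
        · obtain ⟨ω', h1, h2⟩ := h
          have hz : Z ω₂ = Z ω₁ := (Prod.mk.inj h2).2.trans (Prod.mk.inj h1).2.symm
          rw [if_pos hz, ← Finset.sum_filter, ← Finset.mul_sum]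
          have : (Finset.univ.filter fun ω => A ω₁ = A ω ∧ B ω₂ = B ω)
              = Finset.univ.filter fun ω => C ω = C ω' := by
            ext ω
            simp only [Finset.mem_filter, Finset.mem_univ, true_and, h1, h2]
            simp only [hA, hB, hC, Prod.mk.injEq]
            grind
          rw [this, sum_div_pr p hp C ω', mul_one]
        · push Not at h
          rw [Finset.sum_eq_zero]
          · split_ifs <;> simp [h0]
          · intro ω _
            rw [if_neg]
            rintro ⟨h1, h2⟩
            exact h ω h1 h2
      calc _ = ∑ ω₁, ∑ ω₂, ∑ ω, (if A ω₁ = A ω ∧ B ω₂ = B ω then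
              p ω₁ * (p ω₂ / pr p Z (Z ω₂)) * (p ω / pr p C (C ω)) else 0) :=
            Finset.sum_congr rfl fun _ _ => Finset.sum_comm
        _ ≤ ∑ ω₁, ∑ ω₂, (if Z ω₂ = Z ω₁ then p ω₁ * (p ω₂ / pr p Z (Z ω₂)) else 0) :=
            Finset.sum_le_sum fun _ _ => Finset.sum_le_sum fun _ _ => e2 _ _
        _ = ∑ ω₁, p ω₁ := Finset.sum_congr rfl fun ω₁ _ => by
            rw [← Finset.sum_filter, ← Finset.mul_sum, sum_div_pr p hp Z ω₁, mul_one]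
        _ ≤ 1 := hs.le)
  have e : ∀ ω, p ω * Real.logb 2 (pr p A (A ω) * pr p B (B ω) / (pr p C (C ω) * pr p Z (Z ω)))
      = p ω * Real.logb 2 (pr p A (A ω)) + p ω * Real.logb 2 (pr p B (B ω))
        - p ω * Real.logb 2 (pr p C (C ω)) - p ω * Real.logb 2 (pr p Z (Z ω)) := fun ω => by
    rw [Real.logb_div (mul_pos (pA ω) (pB ω)).ne' (mul_pos (pC ω) (pZ ω)).ne',
      Real.logb_mul (pA ω).ne' (pB ω).ne', Real.logb_mul (pC ω).ne' (pZ ω).ne']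
    ring
  simp only [e] at key
  rw [Finset.sum_sub_distrib, Finset.sum_sub_distrib, Finset.sum_add_distrib] at key
  rw [ent_eq_sum, ent_eq_sum, ent_eq_sum, ent_eq_sum]
  linarith

theorem subadd {α β : Type*} [DecidableEq α] [DecidableEq β] (p : Ω → ℝ)
    (hp : ∀ ω, 0 < p ω) (hs : ∑ ω, p ω = 1) (X : Ω → α) (Y : Ω → β) :
    ent p (fun ω => (X ω, Y ω)) ≤ ent p X + ent p Y := by
  have h := submod p hp hs X Y (fun _ => ())
  have h0 : ent p (fun _ => ()) = 0 := by
    rw [ent_eq_sum]; simp [pr, hs]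
  rw [h0, ent_congr p (fun ω => (X ω, Y ω, ())) (fun ω => (X ω, Y ω)) (by simp),
    ent_congr p (fun ω => (X ω, ())) X (by simp),
    ent_congr p (fun ω => (Y ω, ())) Y (by simp)] at h
  linarith

end Helpers

section Cache
variable {N : ℕ} {Q : ℕ} {β : Type*} [DecidableEq β]

/-- Joint entropy of `Y` and the messages indexed by `S`. -/
noncomputable def hS (p : (Fin N → Fin Q) → ℝ) (Y : (Fin N → Fin Q) → β) (S : Finset (Fin N)) : ℝ :=
  ent p (fun ω => (Y ω, S.restrict ω))

theorem hS_chain (p : (Fin N → Fin Q) → ℝ) (hp : ∀ ω, 0 < p ω) (hs : ∑ ω, p ω = 1)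
    (Y : (Fin N → Fin Q) → β) (S R : Finset (Fin N)) :
    hS p Y (S ∪ R) - hS p Y S ≤ ∑ x ∈ R, (hS p Y (insert x S) - hS p Y S) := by
  induction R using Finset.induction_on with
  | empty => simp
  | insert a R ha ih =>
    rw [Finset.sum_insert ha]
    have h := submod p hp hs (R.restrict (π := fun _ => Fin Q)) (fun ω => ω a)
      (fun ω => (Y ω, S.restrict ω))
    have e1 : hS p Y (S ∪ insert a R) = ent p (fun ω => (R.restrict (π := fun _ => Fin Q) ω,
        ω a, (Y ω, S.restrict ω))) := by
      refine ent_congr _ _ _ fun ω ω' => ?_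
      simp only [Prod.mk.injEq, funext_iff, Finset.restrict, Subtype.forall, Finset.mem_union,
        Finset.mem_insert]
      grind
    have e2 : hS p Y (S ∪ R) = ent p (fun ω => (R.restrict (π := fun _ => Fin Q) ω,
        (Y ω, S.restrict ω))) := by
      refine ent_congr _ _ _ fun ω ω' => ?_
      simp only [Prod.mk.injEq, funext_iff, Finset.restrict, Subtype.forall, Finset.mem_union]
      grind
    have e3 : hS p Y (insert a S) = ent p (fun ω => (ω a, (Y ω, S.restrict ω))) := by
      refine ent_congr _ _ _ fun ω ω' => ?_
      simp only [Prod.mk.injEq, funext_iff, Finset.restrict, Subtype.forall, Finset.mem_insert]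
      grind
    have e4 : hS p Y S = ent p (fun ω => (Y ω, S.restrict ω)) := rfl
    linarith

end Cache

theorem double_count {N ℓ : ℕ} (k : Fin ℓ) (f : Finset (Fin N) → Fin N → ℝ) (C : ℝ)
    (hf : ∀ S : Finset (Fin N), S.card = k → ∑ x ∈ Sᶜ, f S x ≤ C) :
    ((N : ℝ) - k) * ∑ d ∈ Finset.univ.filter (fun d : Fin ℓ → Fin N => Function.Injective d),
        f ((Finset.univ.filter (fun j : Fin ℓ => j < k)).image d) (d k)
      ≤ (N.choose ℓ : ℝ) * ℓ.factorial * C := by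
  classical
  set I := Finset.univ.filter (fun d : Fin ℓ → Fin N => Function.Injective d) with hI
  set T : (Fin ℓ → Fin N) → Finset (Fin N) :=
    fun d => (Finset.univ.filter (fun j : Fin ℓ => j < k)).image d with hT
  have hcI : (I.card : ℝ) = (N.choose ℓ : ℝ) * ℓ.factorial := by
    have : I.card = N.descFactorial ℓ := by
      have h := Fintype.card_embedding_eq (α := Fin ℓ) (β := Fin N)
      rw [Fintype.card_fin, Fintype.card_fin] at h
      rw [← h, ← Fintype.card_congr (Equiv.subtypeInjectiveEquivEmbedding (Fin ℓ) (Fin N)),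
        Fintype.card_subtype]
    rw [this, Nat.descFactorial_eq_factorial_mul_choose]
    push_cast; ring
  have hcT : ∀ d ∈ I, (T d).card = k := fun d hd => by
    rw [hT]
    dsimp only
    rw [Finset.card_image_of_injective _ (Finset.mem_filter.1 hd).2]
    have : (Finset.univ.filter (fun j : Fin ℓ => j < k)) = Finset.Iio k := by ext; simp
    rw [this, Fin.card_Iio]
  have hcTc : ∀ d ∈ I, (((T d)ᶜ).card : ℝ) = (N : ℝ) - k := fun d hd => by
    have h := Finset.card_add_card_compl (T d)
    rw [hcT d hd, Fintype.card_fin] at h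
    have h' : ((k : ℕ) : ℝ) + ((T d)ᶜ).card = N := by exact_mod_cast h
    linarith
  -- the swapped tuple
  have hk : ∀ d ∈ I, d k ∉ T d := fun d hd h => by
    obtain ⟨j, hj, hjk⟩ := Finset.mem_image.1 h
    have := (Finset.mem_filter.1 hd).2 hjk
    simp [this] at hj
  have hTs : ∀ d ∈ I, ∀ x ∉ T d, T (Equiv.swap (d k) x ∘ d) = T d := fun d hd x hx => by
    refine Finset.image_congr fun j hj => ?_
    have hjT : d j ∈ T d := Finset.mem_image_of_mem d hj
    refine Equiv.swap_apply_of_ne_of_ne ?_ ?_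
    · intro h; exact hk d hd (h ▸ hjT)
    · intro h; exact hx (h ▸ hjT)
  have hinj : ∀ d ∈ I, ∀ x, (Equiv.swap (d k) x ∘ d) ∈ I := fun d hd x => by
    simp only [hI, Finset.mem_filter, Finset.mem_univ, true_and]
    exact (Equiv.injective _).comp (Finset.mem_filter.1 hd).2
  have hmain : ∑ d ∈ I, ∑ x ∈ (T d)ᶜ, f (T d) x = ∑ d ∈ I, ∑ x ∈ (T d)ᶜ, f (T d) (d k) := by
    rw [Finset.sum_sigma', Finset.sum_sigma']
    have hm : ∀ a ∈ I.sigma (fun d => (T d)ᶜ),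
        (⟨Equiv.swap (a.1 k) a.2 ∘ a.1, a.1 k⟩ : Σ _ : Fin ℓ → Fin N, Fin N)
          ∈ I.sigma (fun d => (T d)ᶜ) := by
      rintro ⟨d, x⟩ h
      simp only [Finset.mem_sigma, Finset.mem_compl] at h ⊢
      refine ⟨hinj d h.1 x, ?_⟩
      rw [hTs d h.1 x h.2]
      exact hk d h.1
    have hi : ∀ a ∈ I.sigma (fun d => (T d)ᶜ),
        (⟨Equiv.swap ((Equiv.swap (a.1 k) a.2 ∘ a.1) k) (a.1 k) ∘ (Equiv.swap (a.1 k) a.2 ∘ a.1),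
          (Equiv.swap (a.1 k) a.2 ∘ a.1) k⟩ : Σ _ : Fin ℓ → Fin N, Fin N) = a := by
      rintro ⟨d, x⟩ h
      simp only [Function.comp_apply, Equiv.swap_apply_left]
      congr 1
      funext j
      simp [Equiv.swap_comm x (d k)]
    refine Finset.sum_nbij' (fun a => ⟨Equiv.swap (a.1 k) a.2 ∘ a.1, a.1 k⟩)
      (fun a => ⟨Equiv.swap (a.1 k) a.2 ∘ a.1, a.1 k⟩) hm hm hi hi ?_
    rintro ⟨d, x⟩ h
    simp only [Finset.mem_sigma, Finset.mem_compl] at h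
    simp only [Function.comp_apply, Equiv.swap_apply_left]
    rw [hTs d h.1 x h.2]
  calc ((N : ℝ) - k) * ∑ d ∈ I, f (T d) (d k) = ∑ d ∈ I, ∑ x ∈ (T d)ᶜ, f (T d) (d k) := by
        rw [Finset.mul_sum]
        refine Finset.sum_congr rfl fun d hd => ?_
        rw [Finset.sum_const, nsmul_eq_mul, hcTc d hd]
    _ = ∑ d ∈ I, ∑ x ∈ (T d)ᶜ, f (T d) x := hmain.symm
    _ ≤ ∑ d ∈ I, C := Finset.sum_le_sum fun d hd => hf _ (hcT d hd)
    _ = _ := by rw [Finset.sum_const, nsmul_eq_mul, hcI]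

/-- **Lemma 3, part (i).** With messages i.i.d. uniform (uniform distribution on
`Ω = Fin N → Fin (2^F)`) and caches `V_k = g_k(W_1,…,W_N)` of size at most
`⌊2^{F·M}⌋`, for every `ℓ ∈ {1,…,min(K,N)}` and every `k ∈ {1,…,ℓ}`
(below `k : Fin ℓ` is the 0-based index, so the receiver is `k+1`):
`α_k ≤ k·M/(N−k+1)`, where `α_k` averages
`(1/F)·I(W_{d_k}; V_1,…,V_k | W_{d_1},…,W_{d_{k−1}})` over all ordered
`ℓ`-tuples `d` with pairwise distinct entries. -/
theorem alpha_bound_i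
    (N K F : ℕ) (hN : 0 < N) (hK : 0 < K) (hF : 0 < F)
    (M : ℝ) (hM : 0 ≤ M)
    (V : Fin K → Type) [∀ k, Fintype (V k)] [∀ k, DecidableEq (V k)]
    (hV : ∀ k, Fintype.card (V k) ≤ ⌊(2 : ℝ) ^ ((F : ℝ) * M)⌋₊)
    (g : ∀ k : Fin K, (Fin N → Fin (2 ^ F)) → V k)
    (ℓ : ℕ) (hℓ1 : 1 ≤ ℓ) (hℓ2 : ℓ ≤ min K N)
    (k : Fin ℓ) :
    (1 / ((F : ℝ) * (N.choose ℓ : ℝ) * (ℓ.factorial : ℝ))) *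
        ∑ d ∈ Finset.univ.filter (fun d : Fin ℓ → Fin N => Function.Injective d),
          cmi (fun _ : Fin N → Fin (2 ^ F) =>
                (1 : ℝ) / (Fintype.card (Fin N → Fin (2 ^ F)) : ℝ))
            (fun ω => ω (d k))
            (fun ω => fun i : Fin K =>
              if (i : ℕ) ≤ (k : ℕ) then some (g i ω) else none)
            (fun ω => fun j : Fin ℓ =>
              if (j : ℕ) < (k : ℕ) then some (ω (d j)) else none)
      ≤ ((k : ℕ) + 1 : ℝ) * M / ((N : ℝ) - (k : ℕ)) := by
  set p : (Fin N → Fin (2 ^ F)) → ℝ :=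
    fun _ => (1 : ℝ) / (Fintype.card (Fin N → Fin (2 ^ F)) : ℝ) with hpdef
  set Y : (Fin N → Fin (2 ^ F)) → ∀ i : Fin K, Option (V i) :=
    fun ω i => if (i : ℕ) ≤ (k : ℕ) then some (g i ω) else none with hY
  have hkl := k.2
  have hlK : ℓ ≤ K := hℓ2.trans (min_le_left _ _)
  have hlN : ℓ ≤ N := hℓ2.trans (min_le_right _ _)
  have hcard : (Fintype.card (Fin N → Fin (2 ^ F)) : ℝ) = 2 ^ (F * N) := by
    simp [pow_mul]
  have hcpos : (0 : ℝ) < (Fintype.card (Fin N → Fin (2 ^ F)) : ℝ) := by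
    rw [hcard]; positivity
  have hne : Nonempty (Fin N → Fin (2 ^ F)) := ⟨fun _ => ⟨0, by positivity⟩⟩
  have hp : ∀ ω, 0 < p ω := fun ω => by rw [hpdef]; positivity
  have hs : ∑ ω, p ω = 1 := by
    simp only [hpdef, Finset.sum_const, nsmul_eq_mul, Finset.card_univ]
    field_simp
  have hlog : ∀ n : ℕ, Real.logb 2 ((2 : ℝ) ^ n) = n := fun n => by
    rw [Real.logb_pow, Real.logb_self_eq_one (by norm_num), mul_one]
  -- entropy of the caches
  have hYent : ent p Y ≤ ((k : ℕ) + 1 : ℝ) * (F * M) := by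
    have hle : (k : ℕ) + 1 ≤ K := by omega
    have e : ent p Y = ent p (fun ω => fun i : Fin ((k : ℕ) + 1) => g (Fin.castLE hle i) ω) := by
      refine ent_congr _ _ _ fun ω ω' => ?_
      rw [funext_iff, funext_iff]
      constructor
      · intro h i
        have := h (Fin.castLE hle i)
        have hi : ((Fin.castLE hle i : Fin K) : ℕ) ≤ k := by
          have := i.2
          simp only [Fin.val_castLE]; omega
        simp only [hY] at this
        rw [if_pos hi, if_pos hi] at this
        exact Option.some.inj this
      · intro h i
        simp only [hY]
        split_ifs with hi
        · exact congrArg some (h ⟨i, by omega⟩)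
        · rfl
    rw [e]
    refine (ent_le_card p hp hs _).trans ?_
    have hx : (0 : ℝ) < 2 ^ ((F : ℝ) * M) := by positivity
    have hb : (Fintype.card (∀ i : Fin ((k : ℕ) + 1), V (Fin.castLE hle i)) : ℝ)
        ≤ ((2 : ℝ) ^ ((F : ℝ) * M)) ^ ((k : ℕ) + 1) := by
      rw [Fintype.card_pi]
      push_cast
      calc _ ≤ ∏ i : Fin ((k : ℕ) + 1), (2 : ℝ) ^ ((F : ℝ) * M) :=
            Finset.prod_le_prod (fun _ _ => by positivity) fun i _ =>
              (Nat.le_floor_iff hx.le).1 (hV _)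
        _ = _ := by simp
    have hpos : (0 : ℝ) < (Fintype.card (∀ i : Fin ((k : ℕ) + 1), V (Fin.castLE hle i)) : ℝ) := by
      have : Nonempty (∀ i : Fin ((k : ℕ) + 1), V (Fin.castLE hle i)) :=
        ⟨fun i => g _ (Classical.arbitrary _)⟩
      exact_mod_cast Fintype.card_pos
    refine (Real.logb_le_logb_of_le (by norm_num) hpos hb).trans ?_
    rw [Real.logb_pow, Real.logb_rpow (by norm_num) (by norm_num)]
    push_cast
    exact le_rfl
  have hWS : ∀ S : Finset (Fin N), ent p (S.restrict (π := fun _ => Fin (2 ^ F))) ≤ S.card * F := by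
    intro S
    refine (ent_le_card p hp hs _).trans (le_of_eq ?_)
    have : (Fintype.card (∀ _ : S, Fin (2 ^ F)) : ℝ) = 2 ^ (F * S.card) := by
      simp [pow_mul]
    rw [this, hlog]; push_cast; ring
  have hW1 : ∀ x : Fin N, ent p (fun ω => ω x) ≤ F := by
    intro x
    refine (ent_le_card p hp hs _).trans (le_of_eq ?_)
    have : (Fintype.card (Fin (2 ^ F)) : ℝ) = 2 ^ F := by simp
    rw [this, hlog]
  have hfull : (N : ℝ) * F ≤ hS p Y Finset.univ := by
    unfold hS
    rw [ent_congr p _ (fun ω => ω) (fun ω ω' => by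
      constructor
      · intro h
        funext i
        exact congrFun (Prod.mk.inj h).2 ⟨i, Finset.mem_univ i⟩
      · intro h; rw [h]), ent_eq_sum]
    have e : ∀ ω : Fin N → Fin (2 ^ F), pr p (fun ω => ω) ω = ((2 : ℝ) ^ (F * N))⁻¹ := fun ω => by
      unfold pr
      rw [Finset.sum_filter, Finset.sum_ite_eq' , if_pos (Finset.mem_univ _), hpdef]
      simp only [hcard, one_div]
    simp only [e]
    rw [← Finset.sum_mul, hs, Real.logb_inv, hlog]
    push_cast
    linarith
  have hC : ∀ S : Finset (Fin N), S.card = k →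
      ∑ x ∈ Sᶜ, ((F : ℝ) + hS p Y S - hS p Y (insert x S)) ≤ ((k : ℕ) + 1 : ℝ) * (F * M) := by
    intro S hS'
    have h1 := hS_chain p hp hs Y S Sᶜ
    rw [Finset.union_compl] at h1
    have h2 : hS p Y S ≤ ent p Y + ent p (S.restrict (π := fun _ => Fin (2 ^ F))) :=
      subadd p hp hs _ _
    have h3 := hWS S
    have h4 : ((S.card : ℝ)) + (Sᶜ.card : ℝ) = N := by
      have := Finset.card_add_card_compl S
      rw [Fintype.card_fin] at this
      exact_mod_cast this
    have h5 : ∑ x ∈ Sᶜ, ((F : ℝ) + hS p Y S - hS p Y (insert x S))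
        = (Sᶜ.card : ℝ) * F - ∑ x ∈ Sᶜ, (hS p Y (insert x S) - hS p Y S) := by
      rw [← nsmul_eq_mul, ← Finset.sum_const, ← Finset.sum_sub_distrib]
      exact Finset.sum_congr rfl fun _ _ => by ring
    have h6 : (S.card : ℝ) * F + (Sᶜ.card : ℝ) * F = N * F := by rw [← add_mul, h4]
    rw [h5]
    linarith
  have hdc := double_count k (fun S x => (F : ℝ) + hS p Y S - hS p Y (insert x S)) _ hC
  have hcmi : ∀ d : Fin ℓ → Fin N, cmi p (fun ω => ω (d k)) Y
      (fun ω => fun j : Fin ℓ => if (j : ℕ) < (k : ℕ) then some (ω (d j)) else none)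
      ≤ (F : ℝ) + hS p Y ((Finset.univ.filter (fun j : Fin ℓ => j < k)).image d)
        - hS p Y (insert (d k) ((Finset.univ.filter (fun j : Fin ℓ => j < k)).image d)) := by
    intro d
    set Z : (Fin N → Fin (2 ^ F)) → Fin ℓ → Option (Fin (2 ^ F)) :=
      fun ω j => if (j : ℕ) < (k : ℕ) then some (ω (d j)) else none with hZ
    have hZiff : ∀ ω ω', Z ω = Z ω' ↔ ∀ j, j < k → ω (d j) = ω' (d j) := by
      intro ω ω'
      rw [funext_iff]
      refine forall_congr' fun j => ?_
      simp only [hZ, Fin.lt_def]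
      split_ifs with h <;> simp [h]
    unfold cmi
    have h1 := subadd p hp hs (fun ω => ω (d k)) Z
    have h2 := hW1 (d k)
    have e1 : ent p (fun ω => (Y ω, Z ω))
        = hS p Y ((Finset.univ.filter (fun j : Fin ℓ => j < k)).image d) := by
      refine ent_congr _ _ _ fun ω ω' => ?_
      rw [Prod.mk.injEq, Prod.mk.injEq, hZiff]
      simp [funext_iff (f := Finset.restrict _ _)]
    have e2 : ent p (fun ω => (ω (d k), Y ω, Z ω))
        = hS p Y (insert (d k) ((Finset.univ.filter (fun j : Fin ℓ => j < k)).image d)) := by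
      refine ent_congr _ _ _ fun ω ω' => ?_
      rw [Prod.mk.injEq, Prod.mk.injEq, Prod.mk.injEq, hZiff]
      simp [funext_iff (f := Finset.restrict _ _)]
      tauto
    linarith
  have hsum := Finset.sum_le_sum
    (s := Finset.univ.filter (fun d : Fin ℓ → Fin N => Function.Injective d)) fun d _ => hcmi d
  have hNk : (0 : ℝ) < (N : ℝ) - (k : ℕ) := by
    have : ((k : ℕ) : ℝ) < N := by exact_mod_cast (by omega : (k : ℕ) < N)
    linarith
  have hFp : (0 : ℝ) < F := by exact_mod_cast hF
  have hch : (0 : ℝ) < N.choose ℓ := by exact_mod_cast Nat.choose_pos hlN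
  have hfac : (0 : ℝ) < ℓ.factorial := by exact_mod_cast Nat.factorial_pos ℓ
  rw [le_div_iff₀ hNk, one_div, mul_assoc, inv_mul_le_iff₀ (by positivity)]
  have h1 := mul_le_mul_of_nonneg_left hsum hNk.le
  have h2 := h1.trans hdc
  rw [mul_comm]
  refine h2.trans (le_of_eq ?_)
  ring
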